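/- Let Q be a real 3×3 matrix and Q₀ = Q − (1/3)(tr Q)I₃ its trace-free part. Define the tableau A_Q ⊆ M₃(ℝ) as the ℝ-linear span of the matrices [x] + [y]Q for x, y ∈ ℝ³. Call Q degenerate if there exist R ∈ SO(3) and real numbers x, y, r with either (r = 0 and y = 0) or r² = x² + y², such that R Q₀ R⁻¹ equals the matrix with rows (−2x, 0, 0), (0, x+3r, 3y), (0, −3y, x−3r). Then the following are equivalent: (1) Q is not degenerate; (2) dim A_Q = 6 and there exists a nonzero covector z ∈ ℝ³ such that no nonzero rank-one matrix of the form x·zᵀ (x ∈ ℝ³, x ≠ 0) belongs to A_Q. (Condition (2) is exactly the statement that the tableau A_Q has dimension 6 and admits a non-characteristic covector, which is equivalent to A_Q being involutive with Cartan characters (3,3,0).) -/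

import Mathlib

open Matrix

noncomputable section

/-- Partial derivative in the `j`-th coordinate direction. -/
def pd {m : ℕ} {F : Type*} [NormedAddCommGroup F] [NormedSpace ℝ F]
    (j : Fin m) (f : (Fin m → ℝ) → F) (u : Fin m → ℝ) : F :=
  fderiv ℝ f u (Pi.single j 1)

/-- The special orthogonal group SO(3), as a set of 3×3 real matrices. -/
def SO3 : Set (Matrix (Fin 3) (Fin 3) ℝ) :=
  {A | Aᵀ * A = 1 ∧ A.det = 1}

/-- The skew-symmetric matrix `[v]` associated to `v ∈ ℝ³`, with `[v] w = w × v`. -/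
def crossMat (v : Fin 3 → ℝ) : Matrix (Fin 3) (Fin 3) ℝ :=
  !![0, v 2, -(v 1); -(v 2), 0, v 0; v 1, -(v 0), 0]

/-- The Jacobian matrix of a map `x : ℝ³ → ℝ³`. -/
def jacobian (x : (Fin 3 → ℝ) → (Fin 3 → ℝ)) (u : Fin 3 → ℝ) :
    Matrix (Fin 3) (Fin 3) ℝ :=
  Matrix.of fun i j => pd j x u i

/-- `W(u) = a(u)⁻¹ · Dx(u)`, the coefficient matrix of the coframing `ω = a⁻¹ dx`. -/
def Wmat (a : (Fin 3 → ℝ) → Matrix (Fin 3) (Fin 3) ℝ)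
    (x : (Fin 3 → ℝ) → (Fin 3 → ℝ)) (u : Fin 3 → ℝ) : Matrix (Fin 3) (Fin 3) ℝ :=
  (a u)⁻¹ * jacobian x u

/-- The tableau `A_Q`: the span of the matrices `[x] + [y] Q`. -/
def tableau (Q : Matrix (Fin 3) (Fin 3) ℝ) : Submodule ℝ (Matrix (Fin 3) (Fin 3) ℝ) :=
  Submodule.span ℝ {M | ∃ x y : Fin 3 → ℝ, M = crossMat x + crossMat y * Q}

end

/-- `Q` is degenerate: its trace-free part is SO(3)-conjugate to one of the two
normal forms of equation (2.4) of the paper. -/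
def DegenerateQ (Q : Matrix (Fin 3) (Fin 3) ℝ) : Prop :=
  ∃ R ∈ SO3, ∃ x y r : ℝ,
    ((r = 0 ∧ y = 0) ∨ r ^ 2 = x ^ 2 + y ^ 2) ∧
    R * (Q - ((1 / 3) * Q.trace) • (1 : Matrix (Fin 3) (Fin 3) ℝ)) * R⁻¹ =
      !![-(2 * x), 0, 0; 0, x + 3 * r, 3 * y; 0, -(3 * y), x - 3 * r]


/-- `Q` minus a scalar has rank at most one. -/
def RankOneShift (Q : Matrix (Fin 3) (Fin 3) ℝ) : Prop :=
  ∃ (l : ℝ) (u v : Fin 3 → ℝ), Q - l • (1 : Matrix (Fin 3) (Fin 3) ℝ) = vecMulVec u v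

lemma sq_sum_pos {y : Fin 3 → ℝ} (hy : y ≠ 0) : 0 < y 0 ^ 2 + y 1 ^ 2 + y 2 ^ 2 := by
  by_contra h
  apply hy
  have h0 : y 0 = 0 := by nlinarith [sq_nonneg (y 0), sq_nonneg (y 1), sq_nonneg (y 2)]
  have h1 : y 1 = 0 := by nlinarith [sq_nonneg (y 0), sq_nonneg (y 1), sq_nonneg (y 2)]
  have h2 : y 2 = 0 := by nlinarith [sq_nonneg (y 0), sq_nonneg (y 1), sq_nonneg (y 2)]
  ext i; fin_cases i <;> simp [h0, h1, h2]

/-- A vector whose cross product with `y ≠ 0` vanishes is a multiple of `y`. -/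
lemma parallel {y : Fin 3 → ℝ} (hy : y ≠ 0) (w : Fin 3 → ℝ)
    (h0 : w 1 * y 2 = w 2 * y 1) (h1 : w 2 * y 0 = w 0 * y 2) (h2 : w 0 * y 1 = w 1 * y 0) :
    w = ((w 0 * y 0 + w 1 * y 1 + w 2 * y 2) / (y 0 ^ 2 + y 1 ^ 2 + y 2 ^ 2)) • y := by
  have hp := (sq_sum_pos hy).ne'
  ext i
  fin_cases i <;> simp <;> rw [div_mul_eq_mul_div, eq_div_iff hp]
  · linear_combination (-y 2) * h1 + y 1 * h2
  · linear_combination (-y 0) * h2 + y 2 * h0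
  · linear_combination (-y 1) * h0 + y 0 * h1

lemma cross_kernel_iff (Q : Matrix (Fin 3) (Fin 3) ℝ) :
    (∃ x y : Fin 3 → ℝ, (x ≠ 0 ∨ y ≠ 0) ∧ crossMat x + crossMat y * Q = 0) ↔ RankOneShift Q := by
  constructor
  · rintro ⟨x, y, hxy, h⟩
    have e : ∀ i j, (crossMat x + crossMat y * Q) i j = 0 := by intro i j; rw [h]; rfl
    have e00 := e 0 0
    have e01 := e 0 1
    have e02 := e 0 2
    have e10 := e 1 0
    have e11 := e 1 1
    have e12 := e 1 2
    have e20 := e 2 0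
    have e21 := e 2 1
    have e22 := e 2 2
    simp [crossMat, Matrix.mul_apply, Matrix.vecMul, dotProduct, Fin.sum_univ_three] at e00 e01 e02 e10 e11 e12 e20 e21 e22
    have hy : y ≠ 0 := by
      rintro rfl
      rcases hxy with hx | hy
      · apply hx
        simp at *
        ext i; fin_cases i <;> simp [*]
      · exact hy rfl
    have hx := parallel hy x
      (by linear_combination (y 0 * e00 + y 1 * e10 + y 2 * e20))
      (by linear_combination (y 0 * e01 + y 1 * e11 + y 2 * e21))
      (by linear_combination (y 0 * e02 + y 1 * e12 + y 2 * e22))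
    generalize (x 0 * y 0 + x 1 * y 1 + x 2 * y 2) / (y 0 ^ 2 + y 1 ^ 2 + y 2 ^ 2) = c at hx
    have x0 : x 0 = c * y 0 := by rw [hx]; simp
    have x1 : x 1 = c * y 1 := by rw [hx]; simp
    have x2 : x 2 = c * y 2 := by rw [hx]; simp
    have g : ∀ j, (fun i => (Q - (-c) • (1 : Matrix (Fin 3) (Fin 3) ℝ)) i j) =
        _ := fun j => parallel hy (fun i => (Q - (-c) • (1 : Matrix (Fin 3) (Fin 3) ℝ)) i j)
          (by fin_cases j <;> simp <;> [linear_combination e00; linear_combination e01 - x2; linear_combination e02 + x1])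
          (by fin_cases j <;> simp <;> [linear_combination e10 + x2; linear_combination e11; linear_combination e12 - x0])
          (by fin_cases j <;> simp <;> [linear_combination e20 - x1; linear_combination e21 + x0; linear_combination e22])
    refine ⟨-c, ?_⟩
    generalize Q - (-c) • (1 : Matrix (Fin 3) (Fin 3) ℝ) = N at g ⊢
    refine ⟨y, fun j => (N 0 j * y 0 + N 1 j * y 1 + N 2 j * y 2) /
      (y 0 ^ 2 + y 1 ^ 2 + y 2 ^ 2), ?_⟩
    ext i j
    have := congrFun (g j) i
    rw [show N i j = _ from this, vecMulVec_apply, Pi.smul_apply, smul_eq_mul, mul_comm]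
  · rintro ⟨l, u, v, h⟩
    have hQ : Q = l • (1 : Matrix (Fin 3) (Fin 3) ℝ) + vecMulVec u v := by rw [← h]; abel
    by_cases hu : u = 0
    · refine ⟨fun _ => -l, fun _ => 1, Or.inr ?_, ?_⟩
      · intro h; simpa using congrFun h 0
      · rw [hQ, hu]
        ext i j; fin_cases i <;> fin_cases j <;>
          simp [crossMat, Matrix.mul_apply, Matrix.vecMul, dotProduct, Fin.sum_univ_three, vecMulVec_apply]
    · refine ⟨(-l) • u, u, Or.inr hu, ?_⟩
      rw [hQ]
      ext i j; fin_cases i <;> fin_cases j <;>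
          simp [crossMat, Matrix.mul_apply, Matrix.vecMul, dotProduct, Fin.sum_univ_three, vecMulVec_apply] <;> ring

lemma crossMat_add (v w : Fin 3 → ℝ) : crossMat (v + w) = crossMat v + crossMat w := by
  ext i j; fin_cases i <;> fin_cases j <;> simp [crossMat] <;> ring

lemma crossMat_smul (c : ℝ) (v : Fin 3 → ℝ) : crossMat (c • v) = c • crossMat v := by
  ext i j; fin_cases i <;> fin_cases j <;> simp [crossMat]

/-- The parametrization of the tableau. -/
def tabMap (Q : Matrix (Fin 3) (Fin 3) ℝ) :
    ((Fin 3 → ℝ) × (Fin 3 → ℝ)) →ₗ[ℝ] Matrix (Fin 3) (Fin 3) ℝ where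
  toFun p := crossMat p.1 + crossMat p.2 * Q
  map_add' p q := by
    rw [Prod.fst_add, Prod.snd_add, crossMat_add, crossMat_add, Matrix.add_mul]
    abel
  map_smul' c p := by
    rw [Prod.smul_fst, Prod.smul_snd, crossMat_smul, crossMat_smul, Matrix.smul_mul, ← smul_add]
    rfl

lemma tableau_eq_range (Q : Matrix (Fin 3) (Fin 3) ℝ) : tableau Q = LinearMap.range (tabMap Q) := by
  have : {M | ∃ x y : Fin 3 → ℝ, M = crossMat x + crossMat y * Q} =
      (LinearMap.range (tabMap Q) : Set (Matrix (Fin 3) (Fin 3) ℝ)) := by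
    ext M
    constructor
    · rintro ⟨x, y, rfl⟩; exact ⟨(x, y), rfl⟩
    · rintro ⟨⟨x, y⟩, rfl⟩; exact ⟨x, y, rfl⟩
  rw [tableau, this, Submodule.span_eq]

lemma mem_tableau (Q M : Matrix (Fin 3) (Fin 3) ℝ) :
    M ∈ tableau Q ↔ ∃ x y : Fin 3 → ℝ, crossMat x + crossMat y * Q = M := by
  rw [tableau_eq_range]
  constructor
  · rintro ⟨⟨x, y⟩, rfl⟩; exact ⟨x, y, rfl⟩
  · rintro ⟨x, y, rfl⟩; exact ⟨(x, y), rfl⟩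

lemma finrank_iff (Q : Matrix (Fin 3) (Fin 3) ℝ) :
    Module.finrank ℝ (tableau Q) = 6 ↔ ¬ RankOneShift Q := by
  rw [← cross_kernel_iff, tableau_eq_range]
  have h := LinearMap.finrank_range_add_finrank_ker (tabMap Q)
  have h6 : Module.finrank ℝ ((Fin 3 → ℝ) × (Fin 3 → ℝ)) = 6 := by simp
  rw [h6] at h
  have : Module.finrank ℝ (LinearMap.range (tabMap Q)) = 6 ↔ LinearMap.ker (tabMap Q) = ⊥ := by
    rw [← Submodule.finrank_eq_zero (R := ℝ)]; omega
  rw [this, LinearMap.ker_eq_bot']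
  constructor
  · rintro H ⟨x, y, hxy, e⟩
    have := H (x, y) e
    rw [Prod.mk_eq_zero] at this
    tauto
  · intro H p hp
    by_contra hne
    refine H ⟨p.1, p.2, ?_, hp⟩
    by_contra hc
    push Not at hc
    exact hne (Prod.ext hc.1 hc.2)

lemma exists_unit_perp (e : Fin 3 → ℝ) (he : e ⬝ᵥ e = 1) :
    ∃ f : Fin 3 → ℝ, f ⬝ᵥ f = 1 ∧ e ⬝ᵥ f = 0 := by
  have key : ∃ g : Fin 3 → ℝ, g ≠ 0 ∧ e ⬝ᵥ g = 0 := by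
    by_cases h : e 0 = 0
    · refine ⟨![1, 0, 0], fun h => by simpa using congrFun h 0, ?_⟩
      simp [dotProduct, Fin.sum_univ_three, h]
    · refine ⟨![e 1, -e 0, 0], fun h' => h (by simpa using congrFun h' 1), ?_⟩
      simp [dotProduct, Fin.sum_univ_three]; ring
  obtain ⟨g, hg, heg⟩ := key
  have hp := sq_sum_pos hg
  refine ⟨(Real.sqrt (g ⬝ᵥ g))⁻¹ • g, ?_, by simp [heg]⟩
  have hp' : 0 < g ⬝ᵥ g := by simp only [dotProduct, Fin.sum_univ_three]; nlinarith
  have hs := Real.sq_sqrt hp'.le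
  have hs' := (Real.sqrt_pos.2 hp').ne'
  simp only [smul_dotProduct, dotProduct_smul, smul_eq_mul]
  field_simp
  linarith

lemma exists_unit (p : Fin 3 → ℝ) (hp0 : p ≠ 0) :
    ∃ (a : ℝ) (f : Fin 3 → ℝ), a ≠ 0 ∧ f ⬝ᵥ f = 1 ∧ p = a • f := by
  have hp := sq_sum_pos hp0
  have hp' : 0 < p ⬝ᵥ p := by simp only [dotProduct, Fin.sum_univ_three]; nlinarith
  have hs := Real.sq_sqrt hp'.le
  have hs' := (Real.sqrt_pos.2 hp').ne'
  refine ⟨Real.sqrt (p ⬝ᵥ p), (Real.sqrt (p ⬝ᵥ p))⁻¹ • p, hs', ?_, ?_⟩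
  · simp only [smul_dotProduct, dotProduct_smul, smul_eq_mul]
    field_simp
    linarith
  · rw [smul_smul, mul_inv_cancel₀ hs', one_smul]

lemma exists_frame (p q : Fin 3 → ℝ) (hpq : p ⬝ᵥ q = 0) :
    ∃ (a b : ℝ) (e f : Fin 3 → ℝ), e ⬝ᵥ e = 1 ∧ f ⬝ᵥ f = 1 ∧ e ⬝ᵥ f = 0 ∧
      p = a • e ∧ q = b • f := by
  by_cases hp : p = 0
  · obtain ⟨b, f, hf, hq⟩ : ∃ (b : ℝ) (f : Fin 3 → ℝ), f ⬝ᵥ f = 1 ∧ q = b • f := by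
      by_cases hq : q = 0
      · exact ⟨0, ![1, 0, 0], by simp [dotProduct, Fin.sum_univ_three], by simp [hq]⟩
      · obtain ⟨b, f, -, h⟩ := exists_unit q hq
        exact ⟨b, f, h⟩
    obtain ⟨e, he, hef⟩ := exists_unit_perp f hf
    exact ⟨0, b, e, f, he, hf, by rw [dotProduct_comm]; exact hef, by simp [hp], hq⟩
  · obtain ⟨a, e, ha, he, rfl⟩ := exists_unit p hp
    by_cases hq : q = 0
    · obtain ⟨f, hf, hef⟩ := exists_unit_perp e he
      exact ⟨a, 0, e, f, he, hf, hef, rfl, by simp [hq]⟩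
    · obtain ⟨b, f, hb, hf, rfl⟩ := exists_unit q hq
      refine ⟨a, b, e, f, he, hf, ?_, rfl, rfl⟩
      simpa [ha, hb] using hpq

/-- Normal form for a pair of vectors. -/
lemma exists_pair_frame (u v : Fin 3 → ℝ) :
    ∃ (k a b : ℝ) (e f : Fin 3 → ℝ), e ⬝ᵥ e = 1 ∧ f ⬝ᵥ f = 1 ∧ e ⬝ᵥ f = 0 ∧
      vecMulVec u v = k • vecMulVec (a • e + b • f) (a • e - b • f) := by
  by_cases hu : u = 0
  · obtain ⟨a, b, e, f, he, hf, hef, -, -⟩ := exists_frame 0 0 (by simp)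
    exact ⟨0, a, b, e, f, he, hf, hef, by simp [hu]⟩
  by_cases hv : v = 0
  · obtain ⟨a, b, e, f, he, hf, hef, -, -⟩ := exists_frame 0 0 (by simp)
    exact ⟨0, a, b, e, f, he, hf, hef, by simp [hv]⟩
  obtain ⟨s, u, hs, hu1, rfl⟩ := exists_unit u hu
  obtain ⟨t, v, ht, hv1, rfl⟩ := exists_unit v hv
  obtain ⟨a, b, e, f, he, hf, hef, h1, h2⟩ := exists_frame (u + v) (u - v) (by
    simp only [add_dotProduct, dotProduct_sub, hu1, hv1, dotProduct_comm v u]; ring)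
  refine ⟨s * t / 4, a, b, e, f, he, hf, hef, ?_⟩
  rw [← h1, ← h2]
  ext i j
  simp [vecMulVec_apply]
  ring

lemma rankOneShift_iff (Q : Matrix (Fin 3) (Fin 3) ℝ) : DegenerateQ Q ↔ RankOneShift Q := by
  constructor
  · rintro ⟨R, ⟨hR, hdet⟩, x, y, r, hr, h⟩
    have hRi : R⁻¹ = Rᵀ := Matrix.inv_eq_left_inv hR
    rw [hRi] at h
    have key : ∃ (m : ℝ) (u v : Fin 3 → ℝ),
        (!![-(2 * x), 0, 0; 0, x + 3 * r, 3 * y; 0, -(3 * y), x - 3 * r] :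
          Matrix (Fin 3) (Fin 3) ℝ) = m • 1 + vecMulVec u v := by
      rcases hr with ⟨rfl, rfl⟩ | hr
      · refine ⟨x, ![1, 0, 0], ![-3 * x, 0, 0], ?_⟩
        ext i j; fin_cases i <;> fin_cases j <;> simp [vecMulVec_apply] <;> ring
      · by_cases hx : x + r = 0
        · have hy : y = 0 := by
            have : y ^ 2 = 0 := by linear_combination -hr - (x - r) * hx
            simpa using this
          have hx' : r = -x := by linarith
          subst hy hx'
          refine ⟨-(2 * x), ![0, 0, 1], ![0, 0, 6 * x], ?_⟩
          ext i j; fin_cases i <;> fin_cases j <;> simp [vecMulVec_apply] <;> ring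
        · refine ⟨-(2 * x), ![0, x + r, -y], ![0, 3, 3 * y / (x + r)], ?_⟩
          ext i j; fin_cases i <;> fin_cases j <;> simp [vecMulVec_apply] <;> field_simp <;>
            first | ring1 | linear_combination (-3) * hr | linear_combination 3 * hr
    obtain ⟨m, u, v, hD⟩ := key
    refine ⟨(1 / 3) * Q.trace + m, Rᵀ *ᵥ u, v ᵥ* R, ?_⟩
    have h2 : Rᵀ * (R * (Q - ((1 / 3) * Q.trace) • (1 : Matrix (Fin 3) (Fin 3) ℝ)) * Rᵀ) * R =
        Q - ((1 / 3) * Q.trace) • (1 : Matrix (Fin 3) (Fin 3) ℝ) := by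
      simp only [Matrix.mul_assoc, hR, Matrix.mul_one]
      rw [← Matrix.mul_assoc, hR, Matrix.one_mul]
    rw [h, hD, Matrix.mul_add, Matrix.add_mul, Matrix.mul_smul, Matrix.mul_one, Matrix.smul_mul, hR,
      Matrix.mul_vecMulVec, Matrix.vecMulVec_mul] at h2
    rw [add_smul, ← sub_sub, ← h2]
    abel
  · rintro ⟨l, u, v, h⟩
    obtain ⟨k, a, b, e, f, he, hf, hef, huv⟩ := exists_pair_frame u v
    rw [huv] at h
    have hQ : Q = l • (1 : Matrix (Fin 3) (Fin 3) ℝ) +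
      k • vecMulVec (a • e + b • f) (a • e - b • f) := by rw [← h]; abel
    simp only [dotProduct, Fin.sum_univ_three] at he hf hef
    have htr : Q.trace = 3 * l + k * (a ^ 2 - b ^ 2) := by
      rw [hQ]
      simp [Matrix.trace, Fin.sum_univ_three, vecMulVec_apply]
      linear_combination k * a ^ 2 * he - k * b ^ 2 * hf
    let R : Matrix (Fin 3) (Fin 3) ℝ :=
      !![e 1 * f 2 - e 2 * f 1, e 2 * f 0 - e 0 * f 2, e 0 * f 1 - e 1 * f 0;
        e 0, e 1, e 2; f 0, f 1, f 2]
    have hlag : (e 1 * f 2 - e 2 * f 1) ^ 2 + (e 2 * f 0 - e 0 * f 2) ^ 2 +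
        (e 0 * f 1 - e 1 * f 0) ^ 2 = 1 := by
      linear_combination (f 0 * f 0 + f 1 * f 1 + f 2 * f 2) * he + hf -
        (e 0 * f 0 + e 1 * f 1 + e 2 * f 2) * hef
    have hRR : R * Rᵀ = 1 := by
      ext i j; fin_cases i <;> fin_cases j <;>
        simp [R, Matrix.mul_apply, Fin.sum_univ_three] <;>
        first | ring1 | linear_combination hlag | linear_combination he | linear_combination hf
              | linear_combination hef
    have hRe : R *ᵥ e = ![0, 1, 0] := by
      ext i; fin_cases i <;> simp [R, Matrix.mulVec, dotProduct, Fin.sum_univ_three] <;>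
        first | ring1 | linear_combination he | linear_combination hef
    have hRf : R *ᵥ f = ![0, 0, 1] := by
      ext i; fin_cases i <;> simp [R, Matrix.mulVec, dotProduct, Fin.sum_univ_three] <;>
        first | ring1 | linear_combination hf | linear_combination hef
    have hdet : R.det = 1 := by
      simp [R, Matrix.det_fin_three]
      linear_combination hlag
    refine ⟨R, ⟨mul_eq_one_comm.1 hRR, hdet⟩, k * (a ^ 2 - b ^ 2) / 6, -(k * a * b) / 3,
      k * (a ^ 2 + b ^ 2) / 6, Or.inr (by ring), ?_⟩
    rw [Matrix.inv_eq_right_inv hRR, htr, hQ]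
    have e1 : l • (1 : Matrix (Fin 3) (Fin 3) ℝ) +
      k • vecMulVec (a • e + b • f) (a • e - b • f) -
      (1 / 3 * (3 * l + k * (a ^ 2 - b ^ 2))) • (1 : Matrix (Fin 3) (Fin 3) ℝ) =
      k • vecMulVec (a • e + b • f) (a • e - b • f) -
        (k * (a ^ 2 - b ^ 2) / 3) • (1 : Matrix (Fin 3) (Fin 3) ℝ) := by
      ext i j; simp; ring
    rw [e1, Matrix.mul_sub, Matrix.sub_mul, Matrix.mul_smul, Matrix.smul_mul, Matrix.mul_smul,
      Matrix.smul_mul, Matrix.mul_one, hRR, Matrix.mul_vecMulVec, Matrix.vecMulVec_mul,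
      Matrix.vecMul_transpose, Matrix.mulVec_add, Matrix.mulVec_sub, Matrix.mulVec_smul,
      Matrix.mulVec_smul, hRe, hRf]
    ext i j; fin_cases i <;> fin_cases j <;> simp [vecMulVec_apply] <;> ring

lemma finite_eig (Q : Matrix (Fin 3) (Fin 3) ℝ) :
    {l : ℝ | (Q - l • (1 : Matrix (Fin 3) (Fin 3) ℝ)).det = 0}.Finite := by
  refine (Q.charpoly.roots.toFinset.finite_toSet).subset ?_
  intro l hl
  have hl' : (Q - l • (1 : Matrix (Fin 3) (Fin 3) ℝ)).det = 0 := hl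
  have : Q.charpoly.eval l = 0 := by
    rw [Matrix.eval_charpoly, ← neg_sub, Matrix.det_neg, Matrix.scalar_apply, ← Matrix.smul_one_eq_diagonal l, hl', mul_zero]
  simp [Q.charpoly_monic.ne_zero, this]

/-- The two kinds of bad covectors. -/
def badL (Q : Matrix (Fin 3) (Fin 3) ℝ) (l : ℝ) : Submodule ℝ (Fin 3 → ℝ) :=
  LinearMap.ker (Q - l • (1 : Matrix (Fin 3) (Fin 3) ℝ)).vecMulLinear

/-- Covectors annihilating the eigenspace. -/
def badR (Q : Matrix (Fin 3) (Fin 3) ℝ) (l : ℝ) : Submodule ℝ (Fin 3 → ℝ) where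
  carrier := {z | ∀ k, (Q - l • (1 : Matrix (Fin 3) (Fin 3) ℝ)) *ᵥ k = 0 → z ⬝ᵥ k = 0}
  add_mem' := by intro a b ha hb k hk; rw [add_dotProduct, ha k hk, hb k hk, add_zero]
  zero_mem' := by intro k _; simp
  smul_mem' := by intro c a ha k hk; rw [smul_dotProduct, ha k hk, smul_zero]

/-- A covector avoiding all bad subspaces. -/
lemma exists_good (Q : Matrix (Fin 3) (Fin 3) ℝ) (hQ : ¬ RankOneShift Q) :
    ∃ z : Fin 3 → ℝ, z ≠ 0 ∧ (∀ (l : ℝ) (w : Fin 3 → ℝ), w ≠ 0 → (Q - l • (1 : Matrix (Fin 3) (Fin 3) ℝ)) *ᵥ w = 0 →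
      z ⬝ᵥ w ≠ 0) ∧ ∀ l : ℝ, z ᵥ* (Q - l • (1 : Matrix (Fin 3) (Fin 3) ℝ)) ≠ 0 := by
  classical
  let S := (finite_eig Q).toFinset
  let T : Finset (Submodule ℝ (Fin 3 → ℝ)) := insert ⊥ (S.image (badL Q) ∪ S.image (badR Q))
  have hT : ⊤ ∉ T := by
    intro h
    simp only [T, Finset.mem_insert, Finset.mem_union, Finset.mem_image] at h
    rcases h with h | ⟨l, hl, h⟩ | ⟨l, hl, h⟩
    · exact top_ne_bot h
    · refine hQ ⟨l, 0, 0, ?_⟩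
      ext i j
      have : Pi.single i 1 ∈ badL Q l := by rw [h]; trivial
      have := congrFun (show Pi.single i 1 ᵥ* (Q - l • (1 : Matrix (Fin 3) (Fin 3) ℝ)) = 0 from this) j
      rw [Matrix.single_one_vecMul] at this
      simpa using this
    · have hl' : (Q - l • (1 : Matrix (Fin 3) (Fin 3) ℝ)).det = 0 := by simpa [S] using hl
      obtain ⟨k, hk, hk0⟩ := Matrix.exists_mulVec_eq_zero_iff.2 hl'
      have : k ∈ badR Q l := by rw [h]; trivial
      exact hk (dotProduct_self_eq_zero.1 (this k hk0))
  have hU := Subspace.biUnion_ne_univ_of_top_notMem hT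
  obtain ⟨z, hz⟩ := (Set.ne_univ_iff_exists_notMem _).1 hU
  have hz' : ∀ p ∈ T, z ∉ p := by
    intro p hp hzp
    exact hz (Set.mem_biUnion hp hzp)
  have hz0 : z ≠ 0 := by
    rintro rfl
    exact hz' ⊥ (by simp [T]) (Submodule.zero_mem _)
  refine ⟨z, hz0, ?_, ?_⟩
  · intro l w hw hw0 hzw
    have hl : (Q - l • (1 : Matrix (Fin 3) (Fin 3) ℝ)).det = 0 :=
      Matrix.exists_mulVec_eq_zero_iff.1 ⟨w, hw, hw0⟩
    have hlS : l ∈ S := by simpa [S] using hl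
    have h1 := hz' (badR Q l) (by
      simp only [T, Finset.mem_insert, Finset.mem_union, Finset.mem_image]
      exact Or.inr (Or.inr ⟨l, hlS, rfl⟩))
    have h2 : ¬ ∀ k, (Q - l • (1 : Matrix (Fin 3) (Fin 3) ℝ)) *ᵥ k = 0 → z ⬝ᵥ k = 0 := h1
    push Not at h2
    obtain ⟨k, hk0, hzk⟩ := h2
    -- the eigenspace is one-dimensional, otherwise `Q` is a rank-one shift
    obtain ⟨N, hN⟩ : ∃ N, N = Q - l • (1 : Matrix (Fin 3) (Fin 3) ℝ) := ⟨_, rfl⟩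
    rw [← hN] at hw0 hk0
    obtain ⟨n, hn⟩ : ∃ n : Fin 3 → ℝ, n = ![w 1 * k 2 - w 2 * k 1, w 2 * k 0 - w 0 * k 2,
      w 0 * k 1 - w 1 * k 0] := ⟨_, rfl⟩
    have n0 : n 0 = w 1 * k 2 - w 2 * k 1 := by rw [hn]; rfl
    have n1 : n 1 = w 2 * k 0 - w 0 * k 2 := by rw [hn]; rfl
    have n2 : n 2 = w 0 * k 1 - w 1 * k 0 := by rw [hn]; rfl
    have hn0 : n ≠ 0 := by
      intro h0
      rw [h0] at n0 n1 n2
      simp only [Pi.zero_apply] at n0 n1 n2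
      apply hw
      simp only [dotProduct, Fin.sum_univ_three] at hzk hzw
      have t0 : w 0 = 0 := (mul_eq_zero.1 (by
        linear_combination k 0 * hzw + z 2 * n1 - z 1 * n2)).resolve_left hzk
      have t1 : w 1 = 0 := (mul_eq_zero.1 (by
        linear_combination k 1 * hzw + z 0 * n2 - z 2 * n0)).resolve_left hzk
      have t2 : w 2 = 0 := (mul_eq_zero.1 (by
        linear_combination k 2 * hzw + z 1 * n0 - z 0 * n1)).resolve_left hzk
      ext i; fin_cases i <;> simp [t0, t1, t2]
    have g : ∀ i, N i = _ := fun i => by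
      have hwi := congrFun hw0 i
      have hki := congrFun hk0 i
      simp only [Matrix.mulVec, dotProduct, Fin.sum_univ_three, Pi.zero_apply] at hwi hki
      exact parallel hn0 (N i)
        (by rw [n1, n2]; linear_combination w 0 * hki - k 0 * hwi)
        (by rw [n0, n2]; linear_combination w 1 * hki - k 1 * hwi)
        (by rw [n0, n1]; linear_combination w 2 * hki - k 2 * hwi)
    refine hQ ⟨l, fun i => (N i 0 * n 0 + N i 1 * n 1 + N i 2 * n 2) /
      (n 0 ^ 2 + n 1 ^ 2 + n 2 ^ 2), n, ?_⟩
    rw [← hN]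
    ext i j
    exact congrFun (g i) j
  · intro l hl0
    have hl : (Q - l • (1 : Matrix (Fin 3) (Fin 3) ℝ)).det = 0 :=
      Matrix.exists_vecMul_eq_zero_iff.1 ⟨z, hz0, hl0⟩
    have hlS : l ∈ S := by simpa [S] using hl
    exact hz' (badL Q l) (by
      simp only [T, Finset.mem_insert, Finset.mem_union, Finset.mem_image]
      exact Or.inr (Or.inl ⟨l, hlS, rfl⟩)) hl0

lemma noncharacteristic (Q : Matrix (Fin 3) (Fin 3) ℝ) (hQ : ¬ RankOneShift Q) :
    ∃ z : Fin 3 → ℝ, z ≠ 0 ∧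
          ∀ x : Fin 3 → ℝ, x ≠ 0 → Matrix.vecMulVec x z ∉ tableau Q := by
  obtain ⟨z, hz, hz1, hz2⟩ := exists_good Q hQ
  refine ⟨z, hz, fun a ha hmem => ?_⟩
  obtain ⟨x, y, h⟩ := (mem_tableau Q _).1 hmem
  have e : ∀ i j, (crossMat x + crossMat y * Q) i j = a i * z j := by
    intro i j; rw [h]; rfl
  have e00 := e 0 0
  have e01 := e 0 1
  have e02 := e 0 2
  have e10 := e 1 0
  have e11 := e 1 1
  have e12 := e 1 2
  have e20 := e 2 0
  have e21 := e 2 1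
  have e22 := e 2 2
  simp [crossMat, Matrix.mul_apply, Matrix.vecMul, dotProduct, Fin.sum_univ_three]
    at e00 e01 e02 e10 e11 e12 e20 e21 e22
  have c0 : x 1 * y 2 - x 2 * y 1 = (y 0 * a 0 + y 1 * a 1 + y 2 * a 2) * z 0 := by
    linear_combination y 0 * e00 + y 1 * e10 + y 2 * e20
  have c1 : x 2 * y 0 - x 0 * y 2 = (y 0 * a 0 + y 1 * a 1 + y 2 * a 2) * z 1 := by
    linear_combination y 0 * e01 + y 1 * e11 + y 2 * e21
  have c2 : x 0 * y 1 - x 1 * y 0 = (y 0 * a 0 + y 1 * a 1 + y 2 * a 2) * z 2 := by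
    linear_combination y 0 * e02 + y 1 * e12 + y 2 * e22
  by_cases hs : y 0 * a 0 + y 1 * a 1 + y 2 * a 2 = 0
  · rw [hs, zero_mul] at c0 c1 c2
    by_cases hy : y = 0
    · subst hy
      have anti : ∀ i j, a i * z j = -(a j * z i) := by
        intro i j
        rw [← e, ← e]
        fin_cases i <;> fin_cases j <;>
          simp [crossMat, Matrix.mul_apply, Matrix.vecMul, dotProduct, Fin.sum_univ_three]
      obtain ⟨j, hj⟩ := Function.ne_iff.1 hz
      apply ha
      ext i
      have hi : a i * z i = 0 := by linarith [anti i i]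
      have h2 : (a i * z j) ^ 2 = 0 := by
        linear_combination (a i * z j) * anti i j - a j * z j * hi
      exact (mul_eq_zero.1 (pow_eq_zero_iff two_ne_zero |>.1 h2)).resolve_right hj
    · have hx := parallel hy x (by linarith) (by linarith) (by linarith)
      generalize (x 0 * y 0 + x 1 * y 1 + x 2 * y 2) / (y 0 ^ 2 + y 1 ^ 2 + y 2 ^ 2) = c at hx
      have x0 : x 0 = c * y 0 := by rw [hx]; simp
      have x1 : x 1 = c * y 1 := by rw [hx]; simp
      have x2 : x 2 = c * y 2 := by rw [hx]; simp
      obtain ⟨N, hN⟩ : ∃ N, N = Q - (-c) • (1 : Matrix (Fin 3) (Fin 3) ℝ) := ⟨_, rfl⟩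
      let r := y ᵥ* N
      have hd : (!![z 0, z 1, z 2; r 0, r 1, r 2; 0, 0, 0] : Matrix (Fin 3) (Fin 3) ℝ).det = 0 := by
        simp [Matrix.det_fin_three]
      obtain ⟨k, hk, hk0⟩ := Matrix.exists_mulVec_eq_zero_iff.2 hd
      have k1 := congrFun hk0 0
      have k2 := congrFun hk0 1
      simp [Matrix.mulVec, dotProduct, Fin.sum_univ_three] at k1 k2
      simp [r, Matrix.vecMul, dotProduct, Fin.sum_univ_three] at k2
      have hNk := parallel hy (N *ᵥ k)
        (by
          simp [hN, Matrix.mulVec, dotProduct, Fin.sum_univ_three]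
          linear_combination k 0 * e00 + k 1 * (e01 - x2) + k 2 * (e02 + x1) + a 0 * k1)
        (by
          simp [hN, Matrix.mulVec, dotProduct, Fin.sum_univ_three]
          linear_combination k 0 * (e10 + x2) + k 1 * e11 + k 2 * (e12 - x0) + a 1 * k1)
        (by
          simp [hN, Matrix.mulVec, dotProduct, Fin.sum_univ_three]
          linear_combination k 0 * (e20 - x1) + k 1 * (e21 + x0) + k 2 * e22 + a 2 * k1)
      have hnum : (N *ᵥ k) 0 * y 0 + (N *ᵥ k) 1 * y 1 + (N *ᵥ k) 2 * y 2 = 0 := by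
        simp [Matrix.mulVec, dotProduct, Fin.sum_univ_three]
        linear_combination k2
      rw [hnum, zero_div, zero_smul, hN] at hNk
      refine hz1 _ k hk hNk ?_
      simpa [dotProduct, Fin.sum_univ_three] using k1
  · obtain ⟨s, hsd⟩ : ∃ s, s = y 0 * a 0 + y 1 * a 1 + y 2 * a 2 := ⟨_, rfl⟩
    rw [← hsd] at c0 c1 c2 hs
    refine hz2 (-(x 0 * a 0 + x 1 * a 1 + x 2 * a 2) / s) ?_
    ext j
    fin_cases j <;> simp [Matrix.vecMul, dotProduct, Fin.sum_univ_three, Matrix.one_apply] <;> field_simp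
    · linear_combination (-Q 0 0) * c0 - Q 1 0 * c1 - Q 2 0 * c2 - x 0 * e00 - x 1 * e10 - x 2 * e20
    · linear_combination (-Q 0 1) * c0 - Q 1 1 * c1 - Q 2 1 * c2 - x 0 * e01 - x 1 * e11 - x 2 * e21
    · linear_combination (-Q 0 2) * c0 - Q 1 2 * c1 - Q 2 2 * c2 - x 0 * e02 - x 1 * e12 - x 2 * e22

/-- `Q` is nondegenerate iff the tableau `A_Q` has dimension 6 and admits
a non-characteristic covector (Proposition 2.3 and Corollary 2.5 of the paper). -/
theorem tableau_involutive_iff_not_degenerate (Q : Matrix (Fin 3) (Fin 3) ℝ) :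
    ¬ DegenerateQ Q ↔
      (Module.finrank ℝ (tableau Q) = 6 ∧
        ∃ z : Fin 3 → ℝ, z ≠ 0 ∧
          ∀ x : Fin 3 → ℝ, x ≠ 0 → Matrix.vecMulVec x z ∉ tableau Q) := by
  rw [rankOneShift_iff, finrank_iff]
  exact ⟨fun h => ⟨h, noncharacteristic Q h⟩, fun h => h.1⟩
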